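/- arXiv:2011.04022 — 2 statements merged into one kernel-verified Lean document; each statement's English description precedes it below -/
import Mathlib

section
/- Let I=(G,ω,𝒫,≺) be a feasible HCPP(l) instance with classes E_1 ≺ … ≺ E_k, let α ≥ 1, and suppose that for every u,v,i for which R[u,v,i] has a solution we are given a feasible solution P̃[u,v,i] of R[u,v,i] with ω(P̃[u,v,i]) ≤ α·ω(P[u,v,i]). Let Γ̃ be the layer graph whose arc (u_i,v_{i+1}) has weight ω(P̃[u,v,i]). Then Γ̃ contains a layer path, and for any least-weight layer path J of Γ̃, the solution W_J obtained by concatenating the walks P̃[·,·,i] along J is a feasible solution for I with ω(W_J) ≤ α·ω(W*), where W* is an optimal solution for I. -/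
namespace HCPPFormal

variable {V : Type} [DecidableEq V]

/-- The degree of a vertex in a multigraph given as a multiset of edges
(loops count twice, multiplicities are counted). -/
def mDeg (M : Multiset (Sym2 V)) (v : V) : ℕ :=
  (M.map fun e => if e = Sym2.diag v then 2 else if v ∈ e then 1 else 0).sum

/-- The vertex set of the multigraph induced by a multiset of edges. -/
def mVerts (M : Multiset (Sym2 V)) : Set V := {v | ∃ e ∈ M, v ∈ e}

/-- Adjacency in the multigraph induced by a multiset of edges. -/
def mAdj (M : Multiset (Sym2 V)) (a b : V) : Prop := s(a, b) ∈ M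

/-- The multigraph induced by a multiset of edges is connected. -/
def mConnected (M : Multiset (Sym2 V)) : Prop :=
  ∀ u ∈ mVerts M, ∀ v ∈ mVerts M, Relation.ReflTransGen (mAdj M) u v

/-- The list of edges traversed by a walk, given as its list of vertices. -/
def walkEdgeList (w : List V) : List (Sym2 V) :=
  (w.zip w.tail).map fun p => s(p.1, p.2)

/-- The multiset of edges traversed by a walk (with multiplicities). -/
def walkEdges (w : List V) : Multiset (Sym2 V) :=
  (walkEdgeList w : Multiset (Sym2 V))

/-- The weight of a multiset of edges. -/
def mWeight (ω : Sym2 V → ℕ) (M : Multiset (Sym2 V)) : ℕ := (M.map ω).sum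

/-- The weight of a walk. -/
def wWeight (ω : Sym2 V → ℕ) (w : List V) : ℕ := mWeight ω (walkEdges w)

/-- A multiset `M` of edges is a perfect matching on the vertex set `U`:
it is a set of pairwise vertex-disjoint non-loop edges
whose endpoints are exactly the vertices of `U`. -/
def IsPerfectMatchingOn (M : Multiset (Sym2 V)) (U : Set V) : Prop :=
  M.Nodup ∧ (∀ e ∈ M, ¬ e.IsDiag) ∧
  (∀ e ∈ M, ∀ e' ∈ M, e ≠ e' → ∀ v : V, v ∈ e → v ∉ e') ∧
  mVerts M = U


/-- An HCPP(l) instance: an undirected graph on the vertex type `V` given by the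
partition of its edge set into `k ≥ 1` nonempty classes `cls 0 ≺ cls 1 ≺ … ≺ cls (k-1)`,
linearly ordered by their indices. -/
structure HCPPl (V : Type) [DecidableEq V] : Type where
  k : ℕ
  hk : 1 ≤ k
  cls : ℕ → Finset (Sym2 V)
  nonempty : ∀ i < k, (cls i).Nonempty
  disj : ∀ i < k, ∀ j < k, i ≠ j → Disjoint (cls i) (cls j)
  nodiag : ∀ i < k, ∀ e ∈ cls i, ¬ e.IsDiag

variable (I : HCPPl V)

/-- The edge set `E = E_1 ∪ … ∪ E_k` of the instance. -/
def edgesOf : Finset (Sym2 V) := (Finset.range I.k).biUnion I.cls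

/-- The edge set `E_1 ∪ … ∪ E_{i+1}` of the first `i+1` classes (0-based index `i`). -/
def upTo (i : ℕ) : Finset (Sym2 V) := (Finset.range (i + 1)).biUnion I.cls

/-- A feasible solution for the HCPP(l) instance `I`: a closed walk in `G`
traversing each edge at least once such that each edge of a class is traversed
only after all edges of all earlier classes have been traversed. -/
def Feasible (T : List V) : Prop :=
  T ≠ [] ∧ T.Chain' (fun a b => s(a, b) ∈ edgesOf I) ∧ T.head? = T.getLast? ∧
  (∀ e ∈ edgesOf I, e ∈ walkEdges T) ∧
  ∀ (q : ℕ) (hq : q < (walkEdgeList T).length) (i : ℕ), i < I.k →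
    (walkEdgeList T).get ⟨q, hq⟩ ∈ I.cls i →
    ∀ j < i, ∀ e ∈ I.cls j,
      ∃ (p : ℕ) (hp : p < (walkEdgeList T).length),
        p < q ∧ (walkEdgeList T).get ⟨p, hp⟩ = e

/-- A solution of the problem `R[u,v,i]`: a walk from `u` to `v` in
`⟨G⟩(E_1 ∪ … ∪ E_{i+1})` traversing all edges of the class `cls i` (0-based `i`). -/
def RSol (u v : V) (i : ℕ) (w : List V) : Prop :=
  w ≠ [] ∧ w.Chain' (fun a b => s(a, b) ∈ upTo I i) ∧
  w.head? = some u ∧ w.getLast? = some v ∧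
  ∀ e ∈ I.cls i, e ∈ walkEdges w

/-- The problem `R[u,v,i]` has a solution. -/
def RFeas (u v : V) (i : ℕ) : Prop := ∃ w, RSol I u v i w

/-- The optimal weight of a solution of `R[u,v,i]`,
i.e. the weight `ω(P[u,v,i])` of the arc `(u_i, v_{i+1})` of the layer graph `Γ`. -/
noncomputable def optR (ω : Sym2 V → ℕ) (u v : V) (i : ℕ) : ℕ :=
  sInf {c : ℕ | ∃ w, RSol I u v i w ∧ wWeight ω w = c}

/-- The vertices incident to the edges of `F`. -/
def vertsOf (F : Finset (Sym2 V)) : Set V := {v | ∃ e ∈ F, v ∈ e}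

/-- A layer path in the layer graph `Γ`, encoded by the vertices `y 0, …, y I.k` of `G`
of which its vertices are copies: it leads from a vertex `v_1 ∈ V_1` to the copy
`v_{k+1} ∈ V_{k+1}` of the same vertex of `V(E_1)`, its `i`-th vertex lies in the
layer `V_i`, and all its arcs are present in `Γ` (0-based layers `0, …, I.k`). -/
def IsLayerPath (y : ℕ → V) : Prop :=
  y 0 = y I.k ∧ y 0 ∈ vertsOf (I.cls 0) ∧
  (∀ i : ℕ, 0 < i → i < I.k →
    y i ∈ vertsOf (I.cls i) ∧ ∃ j < i, y i ∈ vertsOf (I.cls j)) ∧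
  ∀ i < I.k, RFeas I (y i) (y (i + 1)) i

/-- The weight of a layer path in the layer graph `Γ`. -/
noncomputable def lpWeight (ω : Sym2 V → ℕ) (y : ℕ → V) : ℕ :=
  ∑ i ∈ Finset.range I.k, optR I ω (y i) (y (i + 1)) i

/-- Concatenation of a list of walks, gluing the last vertex of each walk to the
(coinciding) first vertex of the next one. -/
def concatWalks : List (List V) → List V
  | [] => []
  | w :: ws => w ++ (concatWalks ws).tail

/-- The closed walk `W_J` obtained by concatenating the walks `P (y i) (y (i+1)) i`
along the layer path given by `y`. -/
def WJ (P : V → V → ℕ → List V) (y : ℕ → V) : List V :=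
  concatWalks ((List.range I.k).map fun i => P (y i) (y (i + 1)) i)

/-- The weight of the layer path given by `y` in the layer graph `Γ̃` whose arc
`(u_i, v_{i+1})` is weighted by the weight of the given walk `Pt u v i`. -/
def lpWeightApx (ω : Sym2 V → ℕ) (Pt : V → V → ℕ → List V) (y : ℕ → V) : ℕ :=
  ∑ i ∈ Finset.range I.k, wWeight ω (Pt (y i) (y (i + 1)) i)

/-! Cut a feasible solution `W` at the first edge of each class. Since a class is entered only after
all earlier ones have been traversed completely, the piece between the cuts for classes `i` and
`i + 1` uses only edges of the classes up to `i` and covers class `i`: it solves `R[u,v,i]` between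
its endpoints. Hence the cut vertices form a layer path of optimal weight at most `ω(W)`.
Conversely, the walks along a layer path concatenate to a feasible solution of the same weight. So
a layer path of least weight with respect to the approximate arc weights costs at most what the
layer path of `W` costs with respect to them, which is at most `α · ω(W)`. -/

/-! ### Edge sequences of walks -/

section Walks

omit [DecidableEq V]

theorem walkEdgeList_cons_cons (a b : V) (l : List V) :
    walkEdgeList (a :: b :: l) = s(a, b) :: walkEdgeList (b :: l) :=
  rfl

theorem length_walkEdgeList (w : List V) : (walkEdgeList w).length = w.length - 1 := by
  simp [walkEdgeList]

theorem getElem_walkEdgeList {w : List V} {q : ℕ} (hq : q < (walkEdgeList w).length)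
    (hq' : q + 1 < w.length := by grind [length_walkEdgeList]) :
    (walkEdgeList w)[q] = s(w[q], w[q + 1]) := by
  simp [walkEdgeList]

theorem walkEdgeList_append_tail {u : V} {w w' : List V} (hw : w.getLast? = some u)
    (hw' : w'.head? = some u) :
    walkEdgeList (w ++ w'.tail) = walkEdgeList w ++ walkEdgeList w' := by
  obtain ⟨l, rfl⟩ := List.head?_eq_some_iff.1 hw'
  induction w with
  | nil => simp at hw
  | cons a t ih =>
    cases t with
    | nil =>
      obtain rfl : a = u := by simpa using hw
      rfl
    | cons b t =>
      simpa [walkEdgeList_cons_cons] using ih (by simpa using hw)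

theorem walkEdgeList_drop (w : List V) (n : ℕ) :
    walkEdgeList (w.drop n) = (walkEdgeList w).drop n := by
  simp [walkEdgeList, List.zip, List.drop_zipWith, List.tail_drop, List.drop_tail]

theorem walkEdgeList_take_add_one (w : List V) (n : ℕ) :
    walkEdgeList (w.take (n + 1)) = (walkEdgeList w).take n := by
  refine List.ext_getElem (by grind [length_walkEdgeList]) fun q _ _ => ?_
  simp [walkEdgeList]

theorem isChain_mk_iff_forall_mem_walkEdgeList {p : Sym2 V → Prop} {w : List V} :
    w.IsChain (fun a b => p s(a, b)) ↔ ∀ e ∈ walkEdgeList w, p e := by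
  induction w with
  | nil => simp [walkEdgeList]
  | cons a l ih =>
    cases l with
    | nil => simp [walkEdgeList]
    | cons b l => simp [walkEdgeList_cons_cons, ih]

theorem mem_walkEdges {e : Sym2 V} {w : List V} : e ∈ walkEdges w ↔ e ∈ walkEdgeList w :=
  Multiset.mem_coe

theorem wWeight_eq_sum_of_walkEdgeList_eq_flatMap (ω : Sym2 V → ℕ) {W : List V} {n : ℕ}
    {f : ℕ → List V}
    (h : walkEdgeList W = (List.range n).flatMap fun i => walkEdgeList (f i)) :
    wWeight ω W = ∑ i ∈ Finset.range n, wWeight ω (f i) := by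
  simp only [wWeight, mWeight, walkEdges, Multiset.map_coe, Multiset.sum_coe, h]
  clear h
  induction n with
  | zero => rfl
  | succ n ih => simp [List.range_succ, Finset.sum_range_succ, ih]

/-! ### Endpoints and concatenation of walks -/

/-- The vertex sequence `w` leads from `u` to `v`. -/
def IsWalkBetween (u v : V) (w : List V) : Prop :=
  w.head? = some u ∧ w.getLast? = some v

theorem IsWalkBetween.append_tail {u v x : V} {w w' : List V} (hw : IsWalkBetween u v w)
    (hw' : IsWalkBetween v x w') : IsWalkBetween u x (w ++ w'.tail) := by
  obtain ⟨l, rfl⟩ := List.head?_eq_some_iff.1 hw'.1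
  obtain ⟨hhead, hlast⟩ := hw
  refine ⟨by simp [hhead], ?_⟩
  have hx := hw'.2
  cases l with
  | nil => simp_all
  | cons b l => simpa using hx

theorem isWalkBetween_drop_take {w : List V} {a b : ℕ} {u v : V} (hab : a ≤ b)
    (hu : w[a]? = some u) (hv : w[b]? = some v) :
    IsWalkBetween u v ((w.take (b + 1)).drop a) := by
  have hb : b < w.length := (List.getElem?_eq_some_iff.1 hv).1
  constructor
  · rw [List.head?_drop, List.getElem?_take_of_lt (by omega), hu]
  · rw [List.getLast?_drop, if_neg (by rw [List.length_take]; omega), List.getLast?_take,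
      if_neg b.succ_ne_zero, Nat.add_sub_cancel, hv, Option.some_or]

theorem isWalkBetween_concatWalks {n : ℕ} {f : ℕ → List V} {y : ℕ → V}
    (h : ∀ i < n + 1, IsWalkBetween (y i) (y (i + 1)) (f i)) :
    IsWalkBetween (y 0) (y (n + 1)) (concatWalks ((List.range (n + 1)).map f)) := by
  induction n generalizing f y with
  | zero => simpa [concatWalks] using h 0 one_pos
  | succ n ih =>
    have hrest := ih (f := fun i => f (i + 1)) (y := fun i => y (i + 1))
      fun i hi => h (i + 1) (by omega)
    rw [List.range_succ_eq_map, List.map_cons, List.map_map]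
    exact (h 0 (by omega)).append_tail hrest

theorem walkEdgeList_concatWalks {n : ℕ} {f : ℕ → List V} {y : ℕ → V}
    (h : ∀ i < n, IsWalkBetween (y i) (y (i + 1)) (f i)) :
    walkEdgeList (concatWalks ((List.range n).map f)) =
      (List.range n).flatMap fun i => walkEdgeList (f i) := by
  induction n generalizing f y with
  | zero => rfl
  | succ n ih =>
    cases n with
    | zero => simp [concatWalks]
    | succ n =>
      have hshift : ∀ i < n + 1, IsWalkBetween (y (i + 1)) (y (i + 1 + 1)) (f (i + 1)) :=
        fun i hi => h (i + 1) (by omega)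
      have hrest := isWalkBetween_concatWalks (y := fun i => y (i + 1)) hshift
      rw [List.range_succ_eq_map, List.map_cons, List.map_map, List.flatMap_cons, List.flatMap_map]
      exact (walkEdgeList_append_tail (h 0 (by omega)).2 hrest.1).trans
        (congrArg _ (ih (y := fun i => y (i + 1)) hshift))

end Walks

/-! ### Cutting lists into consecutive blocks -/

theorem flatMap_range_isPrefix {β : Type*} (g : ℕ → List β) {m n : ℕ} (hmn : m ≤ n) :
    (List.range m).flatMap g <+: (List.range n).flatMap g := by
  obtain ⟨d, rfl⟩ := Nat.exists_eq_add_of_le hmn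
  rw [List.range_add, List.flatMap_append]
  exact List.prefix_append _ _

theorem take_append_drop_take {β : Type*} (l : List β) {a b : ℕ} (hab : a ≤ b) :
    l.take a ++ (l.take b).drop a = l.take b := by
  conv_rhs => rw [← List.take_append_drop a (l.take b), List.take_take, min_eq_left hab]

theorem flatMap_range_drop_take {β : Type*} (l : List β) {t : ℕ → ℕ} (ht : Monotone t)
    (ht0 : t 0 = 0) (n : ℕ) :
    ((List.range n).flatMap fun i => (l.take (t (i + 1))).drop (t i)) = l.take (t n) := by
  induction n with
  | zero => simp [ht0]
  | succ n ih =>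
    rw [List.range_succ, List.flatMap_append, ih, List.flatMap_singleton,
      take_append_drop_take l (ht n.le_succ)]

/-! ### Admissible edge sequences -/

/-- The edges of the classes with index less than `i`, so that `edgesOf I` is `edgesBefore I I.k`
and `upTo I i` is `edgesBefore I (i + 1)`. -/
def edgesBefore (i : ℕ) : Finset (Sym2 V) := (Finset.range i).biUnion I.cls

/-- The edge sequences of feasible solutions: `E` consists of the edges of `I`, contains each of
them, and reaches an edge of a class only after all edges of all earlier classes. -/
structure IsAdmissible (E : List (Sym2 V)) : Prop where
  mem_iff : ∀ e, e ∈ E ↔ e ∈ edgesBefore I I.k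
  cls_subset_take : ∀ {q : ℕ} (hq : q < E.length) {i j : ℕ}, i < I.k → E[q] ∈ I.cls i → j < i →
    ∀ e ∈ I.cls j, e ∈ E.take q

variable {I}

theorem mem_edgesBefore {i : ℕ} {e : Sym2 V} : e ∈ edgesBefore I i ↔ ∃ j < i, e ∈ I.cls j := by
  simp [edgesBefore]

variable (I) in
theorem edgesBefore_mono : Monotone (edgesBefore I) := fun _ _ hij =>
  Finset.biUnion_subset_biUnion_of_subset_left _ (Finset.range_mono hij)

theorem notMem_edgesBefore_of_mem_cls {i j : ℕ} {e : Sym2 V} (hi : i < I.k) (he : e ∈ I.cls i)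
    (hji : j ≤ i) : e ∉ edgesBefore I j := fun h => by
  obtain ⟨c, hc, hec⟩ := mem_edgesBefore.1 h
  exact Finset.disjoint_left.1 (I.disj i hi c (by omega) (by omega)) he hec

theorem feasible_iff {T : List V} :
    Feasible I T ↔ T ≠ [] ∧ T.head? = T.getLast? ∧ IsAdmissible I (walkEdgeList T) := by
  have hchain : T.IsChain (fun a b => s(a, b) ∈ edgesOf I) ↔
      ∀ e ∈ walkEdgeList T, e ∈ edgesOf I :=
    isChain_mk_iff_forall_mem_walkEdgeList (p := (· ∈ edgesOf I))
  constructor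
  · rintro ⟨hne, hT, hclosed, hcover, horder⟩
    refine ⟨hne, hclosed, fun e => ⟨hchain.1 hT e, fun he => mem_walkEdges.1 (hcover e he)⟩, ?_⟩
    intro q hq i j hi hqi hj e he
    obtain ⟨p, hp, hpq, hpe⟩ := horder q hq i hi hqi j hj e he
    exact List.mem_take_iff_getElem.2 ⟨p, lt_min hpq hp, hpe⟩
  · rintro ⟨hne, hclosed, hadm⟩
    refine ⟨hne, hchain.2 fun e => (hadm.mem_iff e).1, hclosed,
      fun e he => mem_walkEdges.2 ((hadm.mem_iff e).2 he), ?_⟩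
    intro q hq i hi hqi j hj e he
    obtain ⟨p, hp, hpe⟩ :=
      List.mem_take_iff_getElem.1 (hadm.cls_subset_take hq hi hqi hj e he)
    exact ⟨p, (lt_min_iff.1 hp).2, (lt_min_iff.1 hp).1, hpe⟩

theorem rSol_iff {u v : V} {i : ℕ} {w : List V} :
    RSol I u v i w ↔ IsWalkBetween u v w ∧ (∀ e ∈ walkEdgeList w, e ∈ edgesBefore I (i + 1)) ∧
      ∀ e ∈ I.cls i, e ∈ walkEdgeList w := by
  have hchain : w.IsChain (fun a b => s(a, b) ∈ upTo I i) ↔ ∀ e ∈ walkEdgeList w, e ∈ upTo I i :=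
    isChain_mk_iff_forall_mem_walkEdgeList (p := (· ∈ upTo I i))
  constructor
  · rintro ⟨-, hw, hhead, hlast, hcover⟩
    exact ⟨⟨hhead, hlast⟩, hchain.1 hw, fun e he => mem_walkEdges.1 (hcover e he)⟩
  · rintro ⟨⟨hhead, hlast⟩, hw, hcover⟩
    refine ⟨?_, hchain.2 hw, hhead, hlast, fun e he => mem_walkEdges.2 (hcover e he)⟩
    rintro rfl
    simp at hhead

theorem isAdmissible_flatMap {g : ℕ → List (Sym2 V)}
    (hbefore : ∀ i < I.k, ∀ e ∈ g i, e ∈ edgesBefore I (i + 1))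
    (hcover : ∀ i < I.k, ∀ e ∈ I.cls i, e ∈ g i) :
    IsAdmissible I ((List.range I.k).flatMap g) where
  mem_iff e := by
    simp only [List.mem_flatMap, List.mem_range]
    constructor
    · rintro ⟨i, hi, he⟩
      exact edgesBefore_mono I hi (hbefore i hi e he)
    · intro he
      obtain ⟨i, hi, he⟩ := mem_edgesBefore.1 he
      exact ⟨i, hi, hcover i hi e he⟩
  cls_subset_take {q} hq {i j} hi hqi hj e he := by
    have hprefix : (List.range (j + 1)).flatMap g <+: (List.range I.k).flatMap g :=
      flatMap_range_isPrefix g (by omega)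
    have hmem : e ∈ (List.range (j + 1)).flatMap g :=
      List.mem_flatMap.2 ⟨j, List.mem_range.2 j.lt_succ_self, hcover j (by omega) e he⟩
    -- The first `j + 1` blocks contain no edge of class `i`, so position `q` lies beyond them.
    have hlen : ((List.range (j + 1)).flatMap g).length ≤ q := by
      by_contra! hlt
      rw [← hprefix.getElem hlt] at hqi
      obtain ⟨c, hc, hqc⟩ := List.mem_flatMap.1 (List.getElem_mem hlt)
      have hcj : c + 1 ≤ j + 1 := List.mem_range.1 hc
      exact notMem_edgesBefore_of_mem_cls hi hqi (by omega) (hbefore c (by omega) _ hqc)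
    rw [List.prefix_iff_eq_take.1 hprefix] at hmem
    exact List.take_subset_take_left _ hlen hmem

/-! ### Cutting an admissible edge sequence -/

variable (I) in
/-- The position of the first edge of `E` outside the classes with index less than `i`, or the
length of `E` if there is none. For admissible `E` and `i < I.k`, this is the first edge of
class `i`. -/
def classStart (E : List (Sym2 V)) (i : ℕ) : ℕ :=
  E.findIdx (· ∉ edgesBefore I i)

theorem classStart_zero (E : List (Sym2 V)) : classStart I E 0 = 0 := by
  cases E <;> simp [classStart, edgesBefore, List.findIdx_cons]

theorem classStart_le_length (E : List (Sym2 V)) (i : ℕ) : classStart I E i ≤ E.length :=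
  List.findIdx_le_length

theorem classStart_mono (E : List (Sym2 V)) : Monotone (classStart I E) := fun i j hij =>
  List.findIdx_le_findIdx fun e _ he => by
    simp only [decide_eq_true_eq] at he ⊢
    exact fun h => he (edgesBefore_mono I hij h)

theorem mem_edgesBefore_of_mem_take_classStart {E : List (Sym2 V)} {i : ℕ} {e : Sym2 V}
    (he : e ∈ E.take (classStart I E i)) : e ∈ edgesBefore I i := by
  obtain ⟨p, hp, rfl⟩ := List.mem_take_iff_getElem.1 he
  simpa using List.not_of_lt_findIdx (lt_min_iff.1 hp).1

namespace IsAdmissible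

variable {E : List (Sym2 V)}

theorem classStart_k (hE : IsAdmissible I E) : classStart I E I.k = E.length :=
  List.findIdx_eq_length_of_false fun e he => by simpa using (hE.mem_iff e).1 he

theorem classStart_lt_length (hE : IsAdmissible I E) {i : ℕ} (hi : i < I.k) :
    classStart I E i < E.length := by
  obtain ⟨e, he⟩ := I.nonempty i hi
  refine List.findIdx_lt_length_of_exists
    ⟨e, (hE.mem_iff e).2 (mem_edgesBefore.2 ⟨i, hi, he⟩), ?_⟩
  simpa using notMem_edgesBefore_of_mem_cls hi he le_rfl

theorem getElem_classStart_mem_cls (hE : IsAdmissible I E) {i : ℕ} (hi : i < I.k) :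
    E[classStart I E i]'(hE.classStart_lt_length hi) ∈ I.cls i := by
  have hlt := hE.classStart_lt_length hi
  obtain ⟨c, hc, hmem⟩ := mem_edgesBefore.1 ((hE.mem_iff _).1 (List.getElem_mem hlt))
  have hnot : E[classStart I E i] ∉ edgesBefore I i := by
    simpa [classStart] using List.findIdx_getElem (w := hlt)
  rcases lt_trichotomy c i with hci | rfl | hic
  · exact absurd (mem_edgesBefore.2 ⟨c, hci, hmem⟩) hnot
  · exact hmem
  · -- The edges of class `i` would all have to be traversed before the first one.
    obtain ⟨e, he⟩ := I.nonempty i hi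
    exact absurd (mem_edgesBefore_of_mem_take_classStart (hE.cls_subset_take hlt hc hmem hic e he))
      (notMem_edgesBefore_of_mem_cls hi he le_rfl)

theorem mem_take_classStart_succ (hE : IsAdmissible I E) {i : ℕ} (hi : i < I.k) {e : Sym2 V}
    (he : e ∈ I.cls i) : e ∈ E.take (classStart I E (i + 1)) := by
  rcases Nat.lt_or_eq_of_le (Nat.succ_le_of_lt hi) with hlt | heq
  · exact hE.cls_subset_take (hE.classStart_lt_length hlt) hlt
      (hE.getElem_classStart_mem_cls hlt) i.lt_succ_self e he
  · rw [← Nat.succ_eq_add_one, heq, hE.classStart_k, List.take_length, hE.mem_iff]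
    exact mem_edgesBefore.2 ⟨i, hi, he⟩

theorem mem_drop_take_classStart (hE : IsAdmissible I E) {i : ℕ} (hi : i < I.k) {e : Sym2 V}
    (he : e ∈ I.cls i) :
    e ∈ (E.take (classStart I E (i + 1))).drop (classStart I E i) := by
  have hmem := hE.mem_take_classStart_succ hi he
  rw [← take_append_drop_take E (classStart_mono E i.le_succ)] at hmem
  exact (List.mem_append.1 hmem).resolve_left fun h =>
    notMem_edgesBefore_of_mem_cls hi he le_rfl (mem_edgesBefore_of_mem_take_classStart h)

theorem classStart_pos (hE : IsAdmissible I E) {i : ℕ} (hi : 0 < i) : 0 < classStart I E i := by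
  obtain ⟨e, he⟩ := I.nonempty 0 I.hk
  refine lt_of_lt_of_le (Nat.pos_of_ne_zero fun h0 => ?_) (classStart_mono E (Nat.succ_le_of_lt hi))
  simpa [h0] using hE.mem_take_classStart_succ I.hk he

end IsAdmissible

/-! ### Feasible solutions and layer paths -/

variable (I) in
/-- The `i`-th of the `I.k` consecutive walks into which a feasible solution `W` is cut at the
first edge of each class. -/
def phase (W : List V) (i : ℕ) : List V :=
  (W.take (classStart I (walkEdgeList W) (i + 1) + 1)).drop (classStart I (walkEdgeList W) i)

theorem walkEdgeList_phase (W : List V) (i : ℕ) :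
    walkEdgeList (phase I W i) =
      ((walkEdgeList W).take (classStart I (walkEdgeList W) (i + 1))).drop
        (classStart I (walkEdgeList W) i) := by
  rw [phase, walkEdgeList_drop, walkEdgeList_take_add_one]

theorem Feasible.sum_wWeight_phase {W : List V} (hW : Feasible I W) (ω : Sym2 V → ℕ) :
    ∑ i ∈ Finset.range I.k, wWeight ω (phase I W i) = wWeight ω W := by
  obtain ⟨-, -, hadm⟩ := feasible_iff.1 hW
  refine (wWeight_eq_sum_of_walkEdgeList_eq_flatMap ω ?_).symm
  simp only [walkEdgeList_phase]
  rw [flatMap_range_drop_take _ (classStart_mono _) (classStart_zero _), hadm.classStart_k,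
    List.take_length]

theorem Feasible.rSol_phase {W : List V} (hW : Feasible I W) {y : ℕ → V}
    (hy : ∀ i, W[classStart I (walkEdgeList W) i]? = some (y i)) {i : ℕ} (hi : i < I.k) :
    RSol I (y i) (y (i + 1)) i (phase I W i) := by
  obtain ⟨-, -, hadm⟩ := feasible_iff.1 hW
  rw [rSol_iff, walkEdgeList_phase]
  exact ⟨isWalkBetween_drop_take (classStart_mono _ i.le_succ) (hy i) (hy (i + 1)),
    fun e he => mem_edgesBefore_of_mem_take_classStart (List.mem_of_mem_drop he),
    fun e he => hadm.mem_drop_take_classStart hi he⟩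

theorem Feasible.isLayerPath {W : List V} (hW : Feasible I W) {y : ℕ → V}
    (hy : ∀ i, W[classStart I (walkEdgeList W) i]? = some (y i)) : IsLayerPath I y := by
  obtain ⟨-, hclosed, hadm⟩ := feasible_iff.1 hW
  have hcls : ∀ i < I.k, y i ∈ vertsOf (I.cls i) := fun i hi => by
    refine ⟨_, hadm.getElem_classStart_mem_cls hi, ?_⟩
    obtain ⟨_, hyi⟩ := List.getElem?_eq_some_iff.1 (hy i)
    rw [getElem_walkEdgeList, hyi]
    exact Sym2.mem_mk_left _ _
  have hearlier : ∀ i, 0 < i → i < I.k → ∃ j < i, y i ∈ vertsOf (I.cls j) := fun i hi0 hi => by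
    obtain ⟨p, hp⟩ := Nat.exists_eq_add_of_lt (hadm.classStart_pos hi0)
    rw [zero_add] at hp
    have hlt := hadm.classStart_lt_length hi
    have hmem : (walkEdgeList W)[p] ∈ edgesBefore I i :=
      mem_edgesBefore_of_mem_take_classStart
        (List.mem_take_iff_getElem.2 ⟨p, lt_min (by omega) (by omega), rfl⟩)
    obtain ⟨j, hj, hpj⟩ := mem_edgesBefore.1 hmem
    refine ⟨j, hj, _, hpj, ?_⟩
    obtain ⟨_, hyi⟩ := List.getElem?_eq_some_iff.1 (hp ▸ hy i)
    rw [getElem_walkEdgeList, hyi]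
    exact Sym2.mem_mk_right _ _
  refine ⟨?_, hcls 0 I.hk, fun i hi0 hi => ⟨hcls i hi, hearlier i hi0 hi⟩,
    fun i hi => ⟨_, hW.rSol_phase hy hi⟩⟩
  rw [← Option.some_inj, ← hy, ← hy, classStart_zero, hadm.classStart_k, length_walkEdgeList,
    ← List.head?_eq_getElem?, hclosed, List.getLast?_eq_getElem?]

theorem optR_le_wWeight {ω : Sym2 V → ℕ} {u v : V} {i : ℕ} {w : List V} (hw : RSol I u v i w) :
    optR I ω u v i ≤ wWeight ω w :=
  Nat.sInf_le ⟨w, hw, rfl⟩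

theorem Feasible.exists_isLayerPath_lpWeight_le {W : List V} (hW : Feasible I W)
    (ω : Sym2 V → ℕ) : ∃ y, IsLayerPath I y ∧ lpWeight I ω y ≤ wWeight ω W := by
  have hlt : ∀ i, classStart I (walkEdgeList W) i < W.length := fun i =>
    calc classStart I (walkEdgeList W) i
        ≤ (walkEdgeList W).length := classStart_le_length _ i
      _ = W.length - 1 := length_walkEdgeList W
      _ < W.length := Nat.sub_lt (List.length_pos_iff.2 hW.1) one_pos
  have hy := fun i => List.getElem?_eq_getElem (hlt i)
  refine ⟨_, hW.isLayerPath hy, ?_⟩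
  rw [← hW.sum_wWeight_phase ω]
  exact Finset.sum_le_sum fun i hi =>
    optR_le_wWeight (hW.rSol_phase hy (Finset.mem_range.1 hi))

section Concatenation

variable {P : V → V → ℕ → List V} {y : ℕ → V}

theorem walkEdgeList_WJ (hP : ∀ i < I.k, RSol I (y i) (y (i + 1)) i (P (y i) (y (i + 1)) i)) :
    walkEdgeList (WJ I P y) =
      (List.range I.k).flatMap fun i => walkEdgeList (P (y i) (y (i + 1)) i) :=
  walkEdgeList_concatWalks fun i hi => (rSol_iff.1 (hP i hi)).1

theorem wWeight_WJ (ω : Sym2 V → ℕ)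
    (hP : ∀ i < I.k, RSol I (y i) (y (i + 1)) i (P (y i) (y (i + 1)) i)) :
    wWeight ω (WJ I P y) = lpWeightApx I ω P y :=
  wWeight_eq_sum_of_walkEdgeList_eq_flatMap ω (walkEdgeList_WJ hP)

theorem feasible_WJ (hclosed : y 0 = y I.k)
    (hP : ∀ i < I.k, RSol I (y i) (y (i + 1)) i (P (y i) (y (i + 1)) i)) :
    Feasible I (WJ I P y) := by
  have hends : IsWalkBetween (y 0) (y I.k) (WJ I P y) := by
    have hk : I.k = I.k - 1 + 1 := (Nat.sub_add_cancel I.hk).symm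
    rw [WJ, hk]
    exact isWalkBetween_concatWalks fun i hi => (rSol_iff.1 (hP i (by omega))).1
  refine feasible_iff.2 ⟨?_, by rw [hends.1, hends.2, hclosed], ?_⟩
  · intro hnil
    simpa [hnil] using hends.1
  · rw [walkEdgeList_WJ hP]
    exact isAdmissible_flatMap (fun i hi => (rSol_iff.1 (hP i hi)).2.1)
      fun i hi => (rSol_iff.1 (hP i hi)).2.2

end Concatenation

section Approximation

variable {R : Type*} [Semiring R] [PartialOrder R] [IsOrderedRing R]

theorem lpWeightApx_le_mul_lpWeight {ω : Sym2 V → ℕ} {α : R} {P : V → V → ℕ → List V} {y : ℕ → V}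
    (h : ∀ i < I.k,
      (wWeight ω (P (y i) (y (i + 1)) i) : R) ≤ α * (optR I ω (y i) (y (i + 1)) i : R)) :
    (lpWeightApx I ω P y : R) ≤ α * (lpWeight I ω y : R) := by
  simp only [lpWeightApx, lpWeight, Nat.cast_sum, Finset.mul_sum]
  exact Finset.sum_le_sum fun i hi => h i (Finset.mem_range.1 hi)

theorem layer_graph_approx_general (ω : Sym2 V → ℕ) {α : R} (hα : 0 ≤ α)
    (hfeas : ∃ T : List V, Feasible I T) (Pt : V → V → ℕ → List V)
    (hPt : ∀ (u v : V) (i : ℕ), i < I.k → RFeas I u v i →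
      RSol I u v i (Pt u v i) ∧ (wWeight ω (Pt u v i) : R) ≤ α * (optR I ω u v i : R)) :
    (∃ y : ℕ → V, IsLayerPath I y) ∧
    ∀ y : ℕ → V, IsLayerPath I y →
      (∀ y' : ℕ → V, IsLayerPath I y' → lpWeightApx I ω Pt y ≤ lpWeightApx I ω Pt y') →
      Feasible I (WJ I Pt y) ∧
      ∀ W : List V, Feasible I W → (wWeight ω (WJ I Pt y) : R) ≤ α * (wWeight ω W : R) := by
  obtain ⟨T, hT⟩ := hfeas
  refine ⟨(hT.exists_isLayerPath_lpWeight_le ω).imp fun _ => And.left, fun y hy hmin => ?_⟩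
  have harc {z : ℕ → V} (hz : IsLayerPath I z) (i : ℕ) (hi : i < I.k) :=
    hPt (z i) (z (i + 1)) i hi (hz.2.2.2 i hi)
  refine ⟨feasible_WJ hy.1 fun i hi => (harc hy i hi).1, fun W hW => ?_⟩
  obtain ⟨y', hy', hle⟩ := hW.exists_isLayerPath_lpWeight_le ω
  calc (wWeight ω (WJ I Pt y) : R)
      = (lpWeightApx I ω Pt y : R) := by rw [wWeight_WJ ω fun i hi => (harc hy i hi).1]
    _ ≤ (lpWeightApx I ω Pt y' : R) := Nat.mono_cast (hmin y' hy')
    _ ≤ α * (lpWeight I ω y' : R) :=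
      lpWeightApx_le_mul_lpWeight fun i hi => (harc hy' i hi).2
    _ ≤ α * (wWeight ω W : R) :=
      mul_le_mul_of_nonneg_left (Nat.mono_cast hle) hα

end Approximation

/-- Let `I` be a feasible HCPP(l) instance with classes `E_1 ≺ … ≺ E_k`, let `α ≥ 1`, and
suppose that for every `u, v, i` for which `R[u,v,i]` has a solution we are given a
feasible solution `P̃[u,v,i]` of `R[u,v,i]` with `ω(P̃[u,v,i]) ≤ α·ω(P[u,v,i])`. Let `Γ̃`
be the layer graph whose arc `(u_i, v_{i+1})` has weight `ω(P̃[u,v,i])`. Then `Γ̃`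
contains a layer path, and for any least-weight layer path `J` of `Γ̃`, the solution
`W_J` obtained by concatenating the walks `P̃[·,·,i]` along `J` is a feasible solution
for `I` with `ω(W_J) ≤ α·ω(W*)`, where `W*` is an optimal solution for `I`. -/
theorem layer_graph_approx {V : Type} [DecidableEq V] (I : HCPPl V) (ω : Sym2 V → ℕ)
    (α : ℚ) (hα : 1 ≤ α)
    (hfeas : ∃ T : List V, Feasible I T)
    (Pt : V → V → ℕ → List V)
    (hPt : ∀ (u v : V) (i : ℕ), i < I.k → RFeas I u v i →
      RSol I u v i (Pt u v i) ∧ (wWeight ω (Pt u v i) : ℚ) ≤ α * (optR I ω u v i : ℚ)) :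
    (∃ y : ℕ → V, IsLayerPath I y) ∧
    ∀ y : ℕ → V, IsLayerPath I y →
      (∀ y' : ℕ → V, IsLayerPath I y' → lpWeightApx I ω Pt y ≤ lpWeightApx I ω Pt y') →
      Feasible I (WJ I Pt y) ∧
      ∀ W : List V, Feasible I W →
        (∀ W' : List V, Feasible I W' → wWeight ω W ≤ wWeight ω W') →
        (wWeight ω (WJ I Pt y) : ℚ) ≤ α * (wWeight ω W : ℚ) := by
  obtain ⟨hexists, hbound⟩ := layer_graph_approx_general ω (zero_le_one.trans hα) hfeas Pt hPt
  exact ⟨hexists, fun y hy hmin =>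
    ⟨(hbound y hy hmin).1, fun W hW _ => (hbound y hy hmin).2 W hW⟩⟩

end HCPPFormal
end

section
/- Let I=(G,ω,s,t,R) be an s-t-RPP instance in which G=(V,E) is the complete graph on V(R)∪{s,t} with s≠t and ω satisfies the triangle inequality. Let T ⊆ E be a set of edges of minimum total weight such that R∪T is a connected spanning subgraph of G, let S be the set of those vertices of V∖{s,t} that are imbalanced in ⟨G⟩(R∪T) together with those vertices of {s,t} that are balanced in ⟨G⟩(R∪T), let P* be an optimal solution for I, and let Q = E(P*) ⊎ R ⊎ T. Then there exist three perfect matchings M_1, M_2, M_3 on S in G with ω(M_1)+ω(M_2)+ω(M_3) ≤ ω(Q); consequently, a minimum-weight perfect matching M on S satisfies ω(M) ≤ ω(Q)/3 ≤ (2/3)·ω(P*). -/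
namespace HCPPFormal

variable {V : Type} [DecidableEq V]

/-- The edge set of the complete graph on the (finite) vertex type `V`. -/
def completeEdges (V : Type) [Fintype V] [DecidableEq V] : Finset (Sym2 V) :=
  Finset.univ.filter fun e => ¬ e.IsDiag

/-- A feasible solution of the s-t-RPP instance `(G, ω, s, t, R)` with edge set `E`:
a walk from `s` to `t` in `G` traversing every edge of `R` at least once. -/
def STSol (E R : Finset (Sym2 V)) (s t : V) (w : List V) : Prop :=
  w ≠ [] ∧ w.Chain' (fun a b => s(a, b) ∈ E) ∧
  w.head? = some s ∧ w.getLast? = some t ∧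
  ∀ e ∈ R, e ∈ walkEdges w

/-- A feasible solution of the RPP instance with edge set `E` and required edges `R`:
a closed walk traversing every edge of `R` at least once. -/
def RPPSol (E R : Finset (Sym2 V)) (w : List V) : Prop :=
  w ≠ [] ∧ w.Chain' (fun a b => s(a, b) ∈ E) ∧
  w.head? = w.getLast? ∧
  ∀ e ∈ R, e ∈ walkEdges w

/-- The set `S` of those vertices outside `{s, t}` that are imbalanced in `⟨G⟩(R ∪ T)`
together with those vertices of `{s, t}` that are balanced in `⟨G⟩(R ∪ T)`. -/
def stS (R T : Finset (Sym2 V)) (s t : V) : Set V :=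
  {v | (v ≠ s ∧ v ≠ t ∧ ¬ Even (mDeg (R ∪ T).val v)) ∨
       ((v = s ∨ v = t) ∧ Even (mDeg (R ∪ T).val v))}


/-!
Call a multigraph a `U`-join if its vertices of odd degree are exactly those of `U`. Replacing two
edges `ba`, `bc` by `ac` turns a `U`-join into a perfect matching on `U` without increasing the
weight, so it suffices to split `Q` into three `S`-joins. Here `S` is the symmetric difference of
`{s, t}` and the set of odd vertices of `J = R ∪ T`. Removing from `J` a subgraph `C` whose odd
vertices are `s` and `t` leaves an `S`-join. As the walk `P*` visits every vertex, its edges contain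
an `S`-join `A`, and then `(P* - A) + C` is an `S`-join too, since the odd vertices of `P*` are `s`
and `t`. The bound `ω(Q) ≤ 2 ω(P*)` holds because the edges of `P*` outside `R` compete with `T`.
-/

open scoped symmDiff

/-- The vertices of odd degree in a multigraph given as a multiset of edges. It is a `Set`, so that
the odd vertices of a sum of multigraphs are a symmetric difference; a multigraph `M` with
`oddVerts M = U` is a `U`-join. -/
def oddVerts (M : Multiset (Sym2 V)) : Set V := {v | Odd (mDeg M v)}

section Degrees

variable {M : Multiset (Sym2 V)} {a b v : V}

theorem mDeg_zero (v : V) : mDeg 0 v = 0 := rfl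

theorem mDeg_add (M N : Multiset (Sym2 V)) (v : V) : mDeg (M + N) v = mDeg M v + mDeg N v := by
  simp only [mDeg, Multiset.map_add, Multiset.sum_add]

theorem mDeg_cons (a b : V) (M : Multiset (Sym2 V)) (v : V) :
    mDeg (s(a, b) ::ₘ M) v = (if v = a then 1 else 0) + (if v = b then 1 else 0) + mDeg M v := by
  simp only [mDeg, Multiset.map_cons, Multiset.sum_cons, Sym2.diag, Sym2.mem_iff]
  congr 1
  by_cases ha : v = a <;> by_cases hb : v = b <;> simp_all [eq_comm]

theorem mDeg_pos_iff : 0 < mDeg M v ↔ v ∈ mVerts M := by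
  induction M using Multiset.induction_on with
  | empty => simp [mDeg_zero, mVerts]
  | cons e M ih =>
    induction e with
    | _ a b =>
      have hcons : v ∈ mVerts (s(a, b) ::ₘ M) ↔ (v = a ∨ v = b) ∨ v ∈ mVerts M := by
        simp [mVerts]
      rw [hcons, ← ih, mDeg_cons]
      grind

theorem sum_mDeg {s : Finset V} (hs : ∀ v ∈ mVerts M, v ∈ s) :
    ∑ v ∈ s, mDeg M v = 2 * Multiset.card M := by
  induction M using Multiset.induction_on with
  | empty => simp [mDeg_zero]
  | cons e M ih =>
    induction e with
    | _ a b =>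
      have ha : a ∈ s := hs a ⟨s(a, b), by simp, by simp⟩
      have hb : b ∈ s := hs b ⟨s(a, b), by simp, by simp⟩
      have hM : ∑ v ∈ s, mDeg M v = 2 * Multiset.card M :=
        ih fun v ⟨e, he, hv⟩ ↦ hs v ⟨e, Multiset.mem_cons_of_mem he, hv⟩
      simp only [mDeg_cons, Finset.sum_add_distrib, Finset.sum_ite_eq', ha, hb, if_true, hM,
        Multiset.card_cons]
      ring

theorem oddVerts_zero : oddVerts (0 : Multiset (Sym2 V)) = ∅ := by
  simp [oddVerts, mDeg_zero]

theorem oddVerts_add (M N : Multiset (Sym2 V)) :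
    oddVerts (M + N) = oddVerts M ∆ oddVerts N := by
  ext v
  simp only [oddVerts, Set.mem_symmDiff, Set.mem_ofPred_eq, mDeg_add]
  grind

theorem oddVerts_cons (a b : V) (M : Multiset (Sym2 V)) :
    oddVerts (s(a, b) ::ₘ M) = {a} ∆ ({b} ∆ oddVerts M) := by
  ext v
  simp only [oddVerts, Set.mem_symmDiff, Set.mem_ofPred_eq, Set.mem_singleton_iff, mDeg_cons]
  grind

theorem oddVerts_subset_mVerts : oddVerts M ⊆ mVerts M := fun _ hv ↦ mDeg_pos_iff.1 hv.pos

theorem oddVerts_ne_singleton (M : Multiset (Sym2 V)) (a : V) : oddVerts M ≠ {a} := by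
  intro h
  let s : Finset V := insert a (M.toFinset.biUnion Sym2.toFinset)
  have hs : ∀ v ∈ mVerts M, v ∈ s := fun v ⟨e, he, hv⟩ ↦
    Finset.mem_insert_of_mem <|
      Finset.mem_biUnion.2 ⟨e, Multiset.mem_toFinset.2 he, Sym2.mem_toFinset.2 hv⟩
  have hodd : {v ∈ s | Odd (mDeg M v)} = {a} := by
    ext v
    have hv : Odd (mDeg M v) ↔ v = a := Set.ext_iff.1 h v
    simp only [Finset.mem_filter, hv, Finset.mem_singleton, and_iff_right_iff_imp]
    rintro rfl
    exact Finset.mem_insert_self _ _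
  have heven : Even (∑ v ∈ s, mDeg M v) := sum_mDeg hs ▸ even_two_mul _
  rw [Finset.even_sum_iff_even_card_odd, hodd, Finset.card_singleton] at heven
  exact Nat.not_even_one heven

omit [DecidableEq V] in
theorem exists_eq_cons_of_mem_mVerts (h : v ∈ mVerts M) : ∃ a N, M = s(v, a) ::ₘ N := by
  obtain ⟨_, he, a, rfl⟩ := h
  exact ⟨a, Multiset.exists_cons_of_mem he⟩

theorem stS_eq_symmDiff (R T : Finset (Sym2 V)) {s t : V} (hst : s ≠ t) :
    stS R T s t = oddVerts (R ∪ T).val ∆ ({s} ∆ {t}) := by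
  ext v
  simp only [stS, oddVerts, Set.mem_symmDiff, Set.mem_ofPred_eq, Set.mem_singleton_iff]
  grind

end Degrees

section Weights

variable (ω : Sym2 V → ℕ)

omit [DecidableEq V] in
theorem mWeight_add (M N : Multiset (Sym2 V)) :
    mWeight ω (M + N) = mWeight ω M + mWeight ω N := by
  simp only [mWeight, Multiset.map_add, Multiset.sum_add]

omit [DecidableEq V] in
theorem mWeight_cons (e : Sym2 V) (M : Multiset (Sym2 V)) :
    mWeight ω (e ::ₘ M) = ω e + mWeight ω M := by
  simp only [mWeight, Multiset.map_cons, Multiset.sum_cons]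

omit [DecidableEq V] in
theorem mWeight_mono {M N : Multiset (Sym2 V)} (h : M ≤ N) : mWeight ω M ≤ mWeight ω N := by
  obtain ⟨K, rfl⟩ := Multiset.le_iff_exists_add.1 h
  exact mWeight_add ω M K ▸ Nat.le_add_right _ _

theorem mWeight_union_le (R T : Finset (Sym2 V)) :
    mWeight ω (R ∪ T).val ≤ mWeight ω R.val + mWeight ω T.val :=
  mWeight_add ω R.val T.val ▸ mWeight_mono ω (Finset.union_val R T ▸ Multiset.union_le_add _ _)

end Weights

section Shortcutting

variable {ω : Sym2 V → ℕ} {F : Multiset (Sym2 V)}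

theorem isPerfectMatchingOn_oddVerts (h : ∀ v, mDeg F v ≤ 1) :
    IsPerfectMatchingOn F (oddVerts F) := by
  have hloop : ∀ v F', F ≠ s(v, v) ::ₘ F' := by
    rintro v F' rfl
    have := h v
    simp only [mDeg_cons, if_true] at this
    lia
  have hdisj : ∀ v a c F', F ≠ s(v, a) ::ₘ s(v, c) ::ₘ F' := by
    rintro v a c F' rfl
    have := h v
    simp only [mDeg_cons, if_true] at this
    lia
  refine ⟨Multiset.nodup_iff_ne_cons_cons.2 ?_, ?_, ?_, ?_⟩
  · rintro ⟨v, a⟩ F' hF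
    exact hdisj v a a F' hF
  · rintro ⟨v, a⟩ he hva
    obtain rfl : v = a := hva
    obtain ⟨F', hF⟩ := Multiset.exists_cons_of_mem he
    exact hloop v F' hF
  · rintro _ he _ he' hne v ⟨a, rfl⟩ ⟨c, rfl⟩
    obtain ⟨F₁, rfl⟩ := Multiset.exists_cons_of_mem he
    have he' := (Multiset.mem_cons.1 he').resolve_left hne.symm
    obtain ⟨F₂, rfl⟩ := Multiset.exists_cons_of_mem he'
    exact hdisj v a c F₂ rfl
  · ext v
    rw [← mDeg_pos_iff]
    have := h v
    simp only [oddVerts, Set.mem_ofPred_eq]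
    grind

theorem exists_card_lt_of_one_lt_mDeg
    (htri : ∀ u v w : V, u ≠ v → v ≠ w → u ≠ w → ω s(u, w) ≤ ω s(u, v) + ω s(v, w))
    {b : V} (h : 1 < mDeg F b) :
    ∃ F', Multiset.card F' < Multiset.card F ∧ oddVerts F' = oddVerts F ∧
      mWeight ω F' ≤ mWeight ω F := by
  obtain ⟨a, F₁, rfl⟩ := exists_eq_cons_of_mem_mVerts (mDeg_pos_iff.1 (zero_lt_one.trans h))
  rcases eq_or_ne b a with rfl | hba
  · refine ⟨F₁, ?_, ?_, ?_⟩
    · simp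
    · rw [oddVerts_cons, symmDiff_symmDiff_cancel_left]
    · grind [mWeight_cons]
  have hb : 0 < mDeg F₁ b := by grind [mDeg_cons]
  obtain ⟨c, F₂, rfl⟩ := exists_eq_cons_of_mem_mVerts (mDeg_pos_iff.1 hb)
  rcases eq_or_ne b c with rfl | hbc
  · refine ⟨s(b, a) ::ₘ F₂, ?_, ?_, ?_⟩
    · simp
    · simp only [oddVerts_cons, symmDiff_symmDiff_cancel_left]
    · grind [mWeight_cons]
  rcases eq_or_ne a c with rfl | hac
  · refine ⟨F₂, ?_, ?_, ?_⟩
    · grind [Multiset.card_cons]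
    · simp only [oddVerts_cons, symmDiff_left_comm {b} {a}, symmDiff_symmDiff_cancel_left]
    · grind [mWeight_cons]
  · refine ⟨s(a, c) ::ₘ F₂, ?_, ?_, ?_⟩
    · simp
    · simp only [oddVerts_cons, symmDiff_left_comm {b} {a}, symmDiff_symmDiff_cancel_left]
    · have := htri a b c hba.symm hbc hac
      rw [Sym2.eq_swap (a := a) (b := b)] at this
      simp only [mWeight_cons]
      lia

theorem exists_isPerfectMatchingOn_oddVerts
    (htri : ∀ u v w : V, u ≠ v → v ≠ w → u ≠ w → ω s(u, w) ≤ ω s(u, v) + ω s(v, w))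
    (F : Multiset (Sym2 V)) :
    ∃ M : Finset (Sym2 V), IsPerfectMatchingOn M.val (oddVerts F) ∧
      mWeight ω M.val ≤ mWeight ω F := by
  induction hn : Multiset.card F using Nat.strong_induction_on generalizing F with
  | _ n ih =>
    by_cases h : ∀ v, mDeg F v ≤ 1
    · have hF := isPerfectMatchingOn_oddVerts h
      exact ⟨⟨F, hF.1⟩, hF, le_rfl⟩
    · push Not at h
      obtain ⟨b, hb⟩ := h
      obtain ⟨F', hcard, hodd, hweight⟩ := exists_card_lt_of_one_lt_mDeg htri hb
      obtain ⟨M, hM, hMF'⟩ := ih _ (hn ▸ hcard) F' rfl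
      exact ⟨M, hodd ▸ hM, hMF'.trans hweight⟩

end Shortcutting

section Walks

variable {w : List V} {s t : V}

omit [DecidableEq V] in
theorem walkEdges_cons_cons (a b : V) (l : List V) :
    walkEdges (a :: b :: l) = s(a, b) ::ₘ walkEdges (b :: l) := rfl

theorem oddVerts_walkEdges (hs : w.head? = some s) (ht : w.getLast? = some t) :
    oddVerts (walkEdges w) = {s} ∆ {t} := by
  obtain ⟨l, rfl⟩ := List.head?_eq_some_iff.1 hs
  clear hs
  induction l generalizing s with
  | nil =>
    obtain rfl : s = t := by simpa using ht
    rw [symmDiff_self]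
    exact oddVerts_zero
  | cons b l ih =>
    rw [walkEdges_cons_cons, oddVerts_cons, ih (by simpa using ht), symmDiff_symmDiff_cancel_left]

omit [DecidableEq V] in
theorem mem_of_mem_mVerts_walkEdges {v : V} (h : v ∈ mVerts (walkEdges w)) : v ∈ w := by
  obtain ⟨e, he, hv⟩ := h
  obtain ⟨p, hp, rfl⟩ := List.mem_map.1 (Multiset.mem_coe.1 he)
  obtain ⟨hp₁, hp₂⟩ := List.of_mem_zip hp
  rcases Sym2.mem_iff.1 hv with rfl | rfl
  exacts [hp₁, List.mem_of_mem_tail hp₂]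

omit [DecidableEq V] in
theorem mem_mVerts_walkEdges (hs : w.head? = some s) (ht : w.getLast? = some t) (hst : s ≠ t)
    {v : V} (hv : v ∈ w) : v ∈ mVerts (walkEdges w) := by
  obtain ⟨l, rfl⟩ := List.head?_eq_some_iff.1 hs
  cases l with
  | nil => exact absurd (by simpa using ht) hst
  | cons b l =>
    clear hs ht hst
    induction l generalizing s b with
    | nil => exact ⟨s(s, b), by simp [walkEdges_cons_cons], by simpa using hv⟩
    | cons c l ih =>
      rcases List.mem_cons.1 hv with rfl | hv
      · exact ⟨s(v, b), by simp [walkEdges_cons_cons], by simp⟩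
      · obtain ⟨e, he, hve⟩ := ih c hv
        exact ⟨e, Multiset.mem_cons_of_mem he, hve⟩

omit [DecidableEq V] in
theorem mem_of_mem_walkEdges_of_isChain {E : Finset (Sym2 V)}
    (h : w.IsChain fun a b ↦ s(a, b) ∈ E) {e : Sym2 V} (he : e ∈ walkEdges w) : e ∈ E := by
  induction h with
  | nil | singleton => exact absurd he (Multiset.notMem_zero e)
  | cons_cons hab _ ih =>
    rw [walkEdges_cons_cons, Multiset.mem_cons] at he
    rcases he with rfl | he
    exacts [hab, ih he]

instance {M : Multiset (Sym2 V)} : Std.Symm (mAdj M) where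
  symm a b h := by rwa [mAdj, Sym2.eq_swap]

omit [DecidableEq V] in
theorem reflTransGen_mAdj_of_mem_walk {M : Multiset (Sym2 V)} {a v : V} {l : List V}
    (hM : walkEdges (a :: l) ⊆ M) (hv : v ∈ a :: l) : Relation.ReflTransGen (mAdj M) a v := by
  induction l generalizing a with
  | nil =>
    obtain rfl := List.mem_singleton.1 hv
    exact .refl
  | cons b l ih =>
    rw [walkEdges_cons_cons, Multiset.cons_subset] at hM
    rcases List.mem_cons.1 hv with rfl | hv
    exacts [.refl, .head hM.1 (ih hM.2 hv)]

omit [DecidableEq V] in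
theorem mConnected_of_walk {M : Multiset (Sym2 V)} (hM : walkEdges w ⊆ M)
    (hw : ∀ v ∈ mVerts M, v ∈ w) : mConnected M := by
  intro u hu v hv
  cases w with
  | nil => simpa using hw u hu
  | cons a l =>
    have hreach {x : V} (hx : x ∈ mVerts M) : Relation.ReflTransGen (mAdj M) a x :=
      reflTransGen_mAdj_of_mem_walk hM (hw x hx)
    exact (Relation.ReflTransGen.stdSymm.symm _ _ (hreach hu)).trans (hreach hv)

omit [DecidableEq V] in
theorem STSol.forall_mem {E R : Finset (Sym2 V)} (hw : STSol E R s t w)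
    (hcov : ∀ v : V, v = s ∨ v = t ∨ ∃ e ∈ R, v ∈ e) (v : V) : v ∈ w := by
  obtain ⟨-, -, hs, ht, hR⟩ := hw
  rcases hcov v with rfl | rfl | ⟨e, he, hv⟩
  · exact List.mem_of_mem_head? hs
  · exact List.mem_of_getLast? ht
  · exact mem_of_mem_mVerts_walkEdges ⟨e, hR e he, hv⟩

end Walks

section Joins

variable {J : Multiset (Sym2 V)} {w : List V} {s t : V}

theorem exists_le_oddVerts_eq_of_reflTransGen (h : Relation.ReflTransGen (mAdj J) s t) :
    ∃ C ≤ J, oddVerts C = {s} ∆ {t} := by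
  induction h using Relation.ReflTransGen.head_induction_on with
  | refl => exact ⟨0, Multiset.zero_le J, by rw [oddVerts_zero, symmDiff_self, Set.bot_eq_empty]⟩
  | @head a b hab _ ih =>
    obtain ⟨C, hCJ, hC⟩ := ih
    by_cases he : s(a, b) ∈ C
    · obtain ⟨C', rfl⟩ := Multiset.exists_cons_of_mem he
      refine ⟨C', (Multiset.le_cons_self _ _).trans hCJ, ?_⟩
      rw [oddVerts_cons, symmDiff_left_comm] at hC
      rw [← symmDiff_right_injective _ hC, symmDiff_symmDiff_cancel_left]
    · refine ⟨s(a, b) ::ₘ C, (Multiset.cons_le_of_notMem he).2 ⟨hab, hCJ⟩, ?_⟩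
      rw [oddVerts_cons, hC, symmDiff_symmDiff_cancel_left]

theorem exists_le_walkEdges_oddVerts_eq_or {a : V} {l : List V} {U : Set V}
    (hU : ∀ v ∈ U, v ∈ a :: l) :
    ∃ A ≤ walkEdges (a :: l), oddVerts A = U ∨ oddVerts A = {a} ∆ U := by
  induction l generalizing a U with
  | nil =>
    refine ⟨0, Multiset.zero_le _, ?_⟩
    rw [oddVerts_zero]
    rcases Set.subset_singleton_iff_eq.1 fun v hv ↦ List.mem_singleton.1 (hU v hv) with rfl | rfl
    · exact .inl rfl
    · exact .inr (symmDiff_self _).symm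
  | cons b l ih =>
    by_cases ha : a ∈ U
    · have hU' : ∀ v ∈ {a} ∆ U, v ∈ b :: l := by grind
      obtain ⟨A, hA, hodd | hodd⟩ := ih hU'
      · exact ⟨A, hA.trans (Multiset.le_cons_self _ _), .inr hodd⟩
      · refine ⟨s(a, b) ::ₘ A, Multiset.cons_le_cons _ hA, .inl ?_⟩
        rw [oddVerts_cons, hodd, symmDiff_symmDiff_cancel_left, symmDiff_symmDiff_cancel_left]
    · have hU' : ∀ v ∈ U, v ∈ b :: l := by grind
      obtain ⟨A, hA, hodd | hodd⟩ := ih hU'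
      · exact ⟨A, hA.trans (Multiset.le_cons_self _ _), .inl hodd⟩
      · refine ⟨s(a, b) ::ₘ A, Multiset.cons_le_cons _ hA, .inr ?_⟩
        rw [oddVerts_cons, hodd, symmDiff_symmDiff_cancel_left]

theorem exists_le_walkEdges_oddVerts_eq {M : Multiset (Sym2 V)} (hM : ∀ v ∈ mVerts M, v ∈ w) :
    ∃ A ≤ walkEdges w, oddVerts A = oddVerts M := by
  cases w with
  | nil =>
    have hempty : oddVerts M = ∅ := Set.eq_empty_of_forall_notMem fun v hv ↦
      List.not_mem_nil (hM v (oddVerts_subset_mVerts hv))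
    exact ⟨0, Multiset.zero_le _, by rw [hempty, oddVerts_zero]⟩
  | cons a l =>
    obtain ⟨A, hA, hodd | hodd⟩ :=
      exists_le_walkEdges_oddVerts_eq_or fun v hv ↦ hM v (oddVerts_subset_mVerts hv)
    · exact ⟨A, hA, hodd⟩
    · refine absurd ?_ (oddVerts_ne_singleton (A + M) a)
      rw [oddVerts_add, hodd, symmDiff_symmDiff_cancel_right]

theorem exists_three_joins (hs : w.head? = some s) (ht : w.getLast? = some t)
    (hw : ∀ v ∈ mVerts J, v ∈ w) (hJ : Relation.ReflTransGen (mAdj J) s t) :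
    ∃ J₁ J₂ J₃, J₁ + J₂ + J₃ = walkEdges w + J ∧ oddVerts J₁ = oddVerts J ∆ ({s} ∆ {t}) ∧
      oddVerts J₂ = oddVerts J ∆ ({s} ∆ {t}) ∧ oddVerts J₃ = oddVerts J ∆ ({s} ∆ {t}) := by
  obtain ⟨C, hCJ, hC⟩ := exists_le_oddVerts_eq_of_reflTransGen hJ
  obtain ⟨D, rfl⟩ := Multiset.le_iff_exists_add.1 hCJ
  obtain ⟨A, hAw, hA⟩ : ∃ A ≤ walkEdges w, oddVerts A = oddVerts D :=
    exists_le_walkEdges_oddVerts_eq fun v ⟨e, he, hv⟩ ↦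
      hw v ⟨e, Multiset.mem_add.2 (.inr he), hv⟩
  obtain ⟨B, hB⟩ := Multiset.le_iff_exists_add.1 hAw
  have hD : oddVerts (C + D) ∆ ({s} ∆ {t}) = oddVerts D := by
    rw [oddVerts_add, hC, symmDiff_symmDiff_self']
  have hBC : oddVerts (B + C) = oddVerts D := by
    have : oddVerts A ∆ oddVerts B = {s} ∆ {t} := by
      rw [← oddVerts_add, ← hB, oddVerts_walkEdges hs ht]
    rw [oddVerts_add, hC, ← this, symmDiff_comm, symmDiff_symmDiff_cancel_right, hA]
  exact ⟨A, D, B + C, by rw [hB]; abel, by rw [hD, hA], hD.symm, by rw [hD, hBC]⟩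

end Joins

section Bounds

variable {E R T : Finset (Sym2 V)} {ω : Sym2 V → ℕ} {s t : V} {w : List V}

theorem exists_three_isPerfectMatchingOn_stS (hst : s ≠ t)
    (htri : ∀ u v w : V, u ≠ v → v ≠ w → u ≠ w → ω s(u, w) ≤ ω s(u, v) + ω s(v, w))
    (hreach : Relation.ReflTransGen (mAdj (R ∪ T).val) s t)
    (hs : w.head? = some s) (ht : w.getLast? = some t)
    (hw : ∀ v ∈ mVerts (R ∪ T).val, v ∈ w) :
    ∃ M₁ M₂ M₃ : Finset (Sym2 V),
      IsPerfectMatchingOn M₁.val (stS R T s t) ∧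
      IsPerfectMatchingOn M₂.val (stS R T s t) ∧
      IsPerfectMatchingOn M₃.val (stS R T s t) ∧
      mWeight ω M₁.val + mWeight ω M₂.val + mWeight ω M₃.val ≤
        mWeight ω (walkEdges w + R.val + T.val) := by
  obtain ⟨J₁, J₂, J₃, hsum, h₁, h₂, h₃⟩ := exists_three_joins hs ht hw hreach
  obtain ⟨M₁, hM₁, hω₁⟩ := exists_isPerfectMatchingOn_oddVerts htri J₁
  obtain ⟨M₂, hM₂, hω₂⟩ := exists_isPerfectMatchingOn_oddVerts htri J₂
  obtain ⟨M₃, hM₃, hω₃⟩ := exists_isPerfectMatchingOn_oddVerts htri J₃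
  rw [stS_eq_symmDiff R T hst]
  refine ⟨M₁, M₂, M₃, h₁ ▸ hM₁, h₂ ▸ hM₂, h₃ ▸ hM₃, ?_⟩
  calc mWeight ω M₁.val + mWeight ω M₂.val + mWeight ω M₃.val
      ≤ mWeight ω J₁ + mWeight ω J₂ + mWeight ω J₃ := by gcongr
    _ = mWeight ω (walkEdges w) + mWeight ω (R ∪ T).val := by
        rw [← mWeight_add, ← mWeight_add, hsum, mWeight_add]
    _ ≤ mWeight ω (walkEdges w + R.val + T.val) := by
        rw [add_assoc, mWeight_add, mWeight_add]
        gcongr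
        exact mWeight_union_le ω R T

theorem mWeight_add_le_wWeight (hst : s ≠ t)
    (hTmin : ∀ T' : Finset (Sym2 V), T' ⊆ E →
      mConnected (R ∪ T').val → (∀ v : V, v ∈ mVerts (R ∪ T').val) →
      mWeight ω T.val ≤ mWeight ω T'.val)
    (hw : STSol E R s t w) (hvisit : ∀ v, v ∈ w) :
    mWeight ω R.val + mWeight ω T.val ≤ wWeight ω w := by
  obtain ⟨-, hchain, hs, ht, hRw⟩ := hw
  let W := (walkEdges w).toFinset
  have hRW : R ⊆ W := fun e he ↦ Multiset.mem_toFinset.2 (hRw e he)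
  have hunion : R ∪ W \ R = W := Finset.union_sdiff_of_subset hRW
  have hspan : ∀ v, v ∈ mVerts W.val := fun v ↦ by
    obtain ⟨e, he, hv⟩ := mem_mVerts_walkEdges hs ht hst (hvisit v)
    exact ⟨e, Multiset.mem_toFinset.2 he, hv⟩
  have hT : mWeight ω T.val ≤ mWeight ω (W \ R).val := by
    refine hTmin _ ?_ ?_ (hunion.symm ▸ hspan)
    · exact fun e he ↦ mem_of_mem_walkEdges_of_isChain hchain
        (Multiset.mem_toFinset.1 (Finset.sdiff_subset he))
    · rw [hunion]
      exact mConnected_of_walk (fun e he ↦ Multiset.mem_toFinset.2 he) fun v _ ↦ hvisit v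
  calc mWeight ω R.val + mWeight ω T.val
      ≤ mWeight ω R.val + mWeight ω (W \ R).val := by gcongr
    _ = mWeight ω W.val := by rw [add_comm]; exact Finset.sum_sdiff hRW
    _ ≤ wWeight ω w := mWeight_mono ω (Multiset.dedup_le _)

end Bounds

theorem three_matchings_bound_general {V : Type} [DecidableEq V]
    (E R T : Finset (Sym2 V)) (ω : Sym2 V → ℕ) (s t : V) (hst : s ≠ t)
    (htri : ∀ u v w : V, u ≠ v → v ≠ w → u ≠ w → ω s(u, w) ≤ ω s(u, v) + ω s(v, w))
    (hreach : Relation.ReflTransGen (mAdj (R ∪ T).val) s t)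
    (hTmin : ∀ T' : Finset (Sym2 V), T' ⊆ E →
      mConnected (R ∪ T').val → (∀ v : V, v ∈ mVerts (R ∪ T').val) →
      mWeight ω T.val ≤ mWeight ω T'.val)
    (Pw : List V) (hPw : STSol E R s t Pw) (hvisit : ∀ v : V, v ∈ Pw) :
    (∃ M₁ M₂ M₃ : Finset (Sym2 V),
      IsPerfectMatchingOn M₁.val (stS R T s t) ∧
      IsPerfectMatchingOn M₂.val (stS R T s t) ∧
      IsPerfectMatchingOn M₃.val (stS R T s t) ∧
      mWeight ω M₁.val + mWeight ω M₂.val + mWeight ω M₃.val ≤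
        mWeight ω (walkEdges Pw + R.val + T.val)) ∧
    ∀ M : Finset (Sym2 V), IsPerfectMatchingOn M.val (stS R T s t) →
      (∀ M' : Finset (Sym2 V), IsPerfectMatchingOn M'.val (stS R T s t) →
        mWeight ω M.val ≤ mWeight ω M'.val) →
      (mWeight ω M.val : ℚ) ≤ (mWeight ω (walkEdges Pw + R.val + T.val) : ℚ) / 3 ∧
      (mWeight ω (walkEdges Pw + R.val + T.val) : ℚ) / 3 ≤ 2 / 3 * (wWeight ω Pw : ℚ) := by
  obtain ⟨M₁, M₂, M₃, h₁, h₂, h₃, hM⟩ := exists_three_isPerfectMatchingOn_stS hst htri hreach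
    hPw.2.2.1 hPw.2.2.2.1 fun v _ ↦ hvisit v
  refine ⟨⟨M₁, M₂, M₃, h₁, h₂, h₃, hM⟩, fun M _ hmin ↦ ⟨?_, ?_⟩⟩
  · have hthree : 3 * mWeight ω M.val ≤ mWeight ω (walkEdges Pw + R.val + T.val) := by
      linarith [hmin M₁ h₁, hmin M₂ h₂, hmin M₃ h₃]
    have : (3 * mWeight ω M.val : ℚ) ≤ mWeight ω (walkEdges Pw + R.val + T.val) := by
      exact_mod_cast hthree
    linarith
  · have htwo : mWeight ω (walkEdges Pw + R.val + T.val) ≤ 2 * wWeight ω Pw := by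
      rw [add_assoc, mWeight_add, mWeight_add, two_mul]
      gcongr
      exacts [le_rfl, mWeight_add_le_wWeight hst hTmin hPw hvisit]
    have : (mWeight ω (walkEdges Pw + R.val + T.val) : ℚ) ≤ 2 * wWeight ω Pw := by
      exact_mod_cast htwo
    linarith

/-- Let `I = (G, ω, s, t, R)` be an s-t-RPP instance in which `G = (V, E)` is the complete
graph on `V(R) ∪ {s, t}` with `s ≠ t` and `ω` satisfies the triangle inequality. Let
`T ⊆ E` be a set of edges of minimum total weight such that `R ∪ T` is a connected
spanning subgraph of `G`, let `S` be the set of those vertices of `V ∖ {s,t}` that are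
imbalanced in `⟨G⟩(R ∪ T)` together with those vertices of `{s, t}` that are balanced
in `⟨G⟩(R ∪ T)`, let `P*` be an optimal solution for `I`, and let `Q = E(P*) ⊎ R ⊎ T`.
Then there exist three perfect matchings `M₁, M₂, M₃` on `S` in `G` with
`ω(M₁) + ω(M₂) + ω(M₃) ≤ ω(Q)`; consequently, a minimum-weight perfect matching `M`
on `S` satisfies `ω(M) ≤ ω(Q)/3 ≤ (2/3)·ω(P*)`. -/
theorem three_matchings_bound {V : Type} [Fintype V] [DecidableEq V]
    (R T : Finset (Sym2 V)) (ω : Sym2 V → ℕ) (s t : V) (hst : s ≠ t)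
    (hR : R ⊆ completeEdges V) (hT : T ⊆ completeEdges V)
    (hcov : ∀ v : V, v = s ∨ v = t ∨ ∃ e ∈ R, v ∈ e)
    (htri : ∀ u v w : V, u ≠ v → v ≠ w → u ≠ w → ω s(u, w) ≤ ω s(u, v) + ω s(v, w))
    (hconn : mConnected (R ∪ T).val)
    (hspan : ∀ v : V, v ∈ mVerts (R ∪ T).val)
    (hTmin : ∀ T' : Finset (Sym2 V), T' ⊆ completeEdges V →
      mConnected (R ∪ T').val → (∀ v : V, v ∈ mVerts (R ∪ T').val) →
      mWeight ω T.val ≤ mWeight ω T'.val)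
    (Pw : List V) (hPw : STSol (completeEdges V) R s t Pw)
    (hPopt : ∀ w : List V, STSol (completeEdges V) R s t w → wWeight ω Pw ≤ wWeight ω w) :
    (∃ M₁ M₂ M₃ : Finset (Sym2 V),
      IsPerfectMatchingOn M₁.val (stS R T s t) ∧
      IsPerfectMatchingOn M₂.val (stS R T s t) ∧
      IsPerfectMatchingOn M₃.val (stS R T s t) ∧
      mWeight ω M₁.val + mWeight ω M₂.val + mWeight ω M₃.val ≤
        mWeight ω (walkEdges Pw + R.val + T.val)) ∧
    ∀ M : Finset (Sym2 V), IsPerfectMatchingOn M.val (stS R T s t) →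
      (∀ M' : Finset (Sym2 V), IsPerfectMatchingOn M'.val (stS R T s t) →
        mWeight ω M.val ≤ mWeight ω M'.val) →
      (mWeight ω M.val : ℚ) ≤ (mWeight ω (walkEdges Pw + R.val + T.val) : ℚ) / 3 ∧
      (mWeight ω (walkEdges Pw + R.val + T.val) : ℚ) / 3 ≤ 2 / 3 * (wWeight ω Pw : ℚ) := by
  exact three_matchings_bound_general (completeEdges V) R T ω s t hst htri
    (hconn s (hspan s) t (hspan t)) hTmin Pw hPw (hPw.forall_mem hcov)

end HCPPFormal
end
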